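/- The following three assertions are equivalent: (1) every productively quasi-Lindelöf topological space is powerfully quasi-Lindelöf; (2) every productively Lindelöf space is powerfully Lindelöf; (3) every zero-dimensional productively Lindelöf space is powerfully Lindelöf. -/

import Mathlib

open Set Cardinal Topology

universe u v

/-- A space is quasi-Lindelöf if every open cover has a countable subcover
(no separation axioms assumed). -/
def QuasiLindelofSp (X : Type u) [TopologicalSpace X] : Prop :=
  ∀ 𝒰 : Set (Set X), (∀ U ∈ 𝒰, IsOpen U) → ⋃₀ 𝒰 = Set.univ →
    ∃ 𝒱 ⊆ 𝒰, 𝒱.Countable ∧ ⋃₀ 𝒱 = Set.univ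

/-- Lindelöf in the sense of Engelking: regular (T3, including T1) and
every open cover has a countable subcover. -/
def EngLindelofSp (X : Type u) [TopologicalSpace X] : Prop :=
  RegularSpace X ∧ T1Space X ∧ QuasiLindelofSp X

/-- X is productively Lindelöf if X × Y is Lindelöf for every Lindelöf space Y. -/
def ProductivelyLindelofSp (X : Type u) [TopologicalSpace X] : Prop :=
  ∀ (Y : Type u) [TopologicalSpace Y], EngLindelofSp Y → EngLindelofSp (X × Y)

/-- X is productively quasi-Lindelöf if X × Y is quasi-Lindelöf for every Lindelöf space Y. -/
def ProductivelyQuasiLindelofSp (X : Type u) [TopologicalSpace X] : Prop :=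
  ∀ (Y : Type u) [TopologicalSpace Y], EngLindelofSp Y → QuasiLindelofSp (X × Y)

/-- X is powerfully Lindelöf if X^ω is Lindelöf. -/
def PowerfullyLindelofSp (X : Type u) [TopologicalSpace X] : Prop :=
  EngLindelofSp (ℕ → X)

/-- X is powerfully quasi-Lindelöf if X^ω is quasi-Lindelöf. -/
def PowerfullyQuasiLindelofSp (X : Type u) [TopologicalSpace X] : Prop :=
  QuasiLindelofSp (ℕ → X)

/-- Tightness of X is at most κ. -/
def TightnessLE (X : Type u) [TopologicalSpace X] (κ : Cardinal.{u}) : Prop :=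
  ∀ (A : Set X) (x : X), x ∈ closure A → ∃ B ⊆ A, #B ≤ κ ∧ x ∈ closure B

/-- X has countable tightness. -/
def CountableTightness (X : Type u) [TopologicalSpace X] : Prop :=
  ∀ (A : Set X) (x : X), x ∈ closure A → ∃ B ⊆ A, B.Countable ∧ x ∈ closure B

/-- The Lindelöf number of X is at most κ: every open cover has a subcover of size ≤ κ. -/
def LindelofNumberLE (X : Type u) [TopologicalSpace X] (κ : Cardinal.{u}) : Prop :=
  ∀ 𝒰 : Set (Set X), (∀ U ∈ 𝒰, IsOpen U) → ⋃₀ 𝒰 = Set.univ →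
    ∃ 𝒱 ⊆ 𝒰, #𝒱 ≤ κ ∧ ⋃₀ 𝒱 = Set.univ

/-- The weight of X is at most κ: there is a base of size ≤ κ. -/
def WeightLE (X : Type u) [TopologicalSpace X] (κ : Cardinal.{u}) : Prop :=
  ∃ B : Set (Set X), TopologicalSpace.IsTopologicalBasis B ∧ #B ≤ κ

/-- N is a network for X. -/
def IsNetwork (X : Type u) [TopologicalSpace X] (N : Set (Set X)) : Prop :=
  ∀ (x : X) (U : Set X), IsOpen U → x ∈ U → ∃ n ∈ N, x ∈ n ∧ n ⊆ U

/-- X is linearly Lindelöf: regular (incl. T1) and every open cover linearly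
ordered by inclusion has a countable subcover. -/
def LinearlyLindelofSp (X : Type u) [TopologicalSpace X] : Prop :=
  RegularSpace X ∧ T1Space X ∧
    ∀ 𝒰 : Set (Set X), (∀ U ∈ 𝒰, IsOpen U) → IsChain (· ⊆ ·) 𝒰 → ⋃₀ 𝒰 = Set.univ →
      ∃ 𝒱 ⊆ 𝒰, 𝒱.Countable ∧ ⋃₀ 𝒱 = Set.univ

/-- U ⊆ X^ω is a basic open set: a product of open sets, all but finitely many of
which equal X. -/
def IsBasicOpen (X : Type u) [TopologicalSpace X] (U : Set (ℕ → X)) : Prop :=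
  ∃ V : ℕ → Set X, (∀ i, IsOpen (V i)) ∧ {i | V i ≠ Set.univ}.Finite ∧
    U = Set.pi Set.univ V

/-- A family of subsets of Z is point-κ if every point belongs to at most κ members. -/
def PointLE {Z : Type u} (𝒲 : Set (Set Z)) (κ : Cardinal.{u}) : Prop :=
  ∀ z : Z, #({W ∈ 𝒲 | z ∈ W}) ≤ κ

/-- A non-empty space is zero-dimensional if it is T1 and has a base of clopen sets. -/
def ZeroDimensionalSp (Y : Type u) [TopologicalSpace Y] : Prop :=
  Nonempty Y ∧ T1Space Y ∧
    ∃ B : Set (Set Y), TopologicalSpace.IsTopologicalBasis B ∧ ∀ b ∈ B, IsClopen b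

/-!
For a space `X`, let `Z` be the set of those families of open subsets of `X` that contain all
open neighbourhoods of some point, as a subspace of the Cantor cube `2^τ` on the topology `τ` of
`X`. It is zero-dimensional. Relating `x` to the families containing its neighbourhoods is a closed
relation with compact values, so `Z × Y` inherits the Lindelöf property from `X × Y`. Conversely,
sending `x` to the family of its open neighbourhoods maps `X` into `Z` so that a filter on `X`
whose image converges in `Z` converges in `X`. This passes to powers, so `X^ω` inherits the
Lindelöf property from `Z^ω`.
-/

open Filter TopologicalSpace

section LindelofTransfer

theorem isLindelof_preimage_of_isProperMap {X Y : Type*} [TopologicalSpace X] [TopologicalSpace Y]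
    {f : X → Y} (hf : IsProperMap f) {s : Set Y} (hs : IsLindelof s) : IsLindelof (f ⁻¹' s) := by
  intro F _ _ hF
  obtain ⟨y, hys, hy⟩ := hs (f := map f F) (tendsto_principal.2 (le_principal_iff.1 hF))
  obtain ⟨x, rfl, hx⟩ := hf.clusterPt_of_mapClusterPt hy
  exact ⟨x, hys, hx⟩

theorem lindelofSpace_cod_prod {X K : Type*} (Y : Type*) [TopologicalSpace X] [TopologicalSpace K]
    [TopologicalSpace Y] [CompactSpace K] [LindelofSpace (X × Y)] {R : SetRel X K}
    (hR : IsClosed R) : LindelofSpace (R.cod × Y) := by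
  let G : Set ((X × Y) × K) := {p | (p.1.1, p.2) ∈ R}
  have hG_closed : IsClosed G := hR.preimage (by fun_prop)
  have hXYK : IsLindelof (univ : Set ((X × Y) × K)) :=
    isLindelof_preimage_of_isProperMap isProperMap_fst_of_compactSpace isLindelof_univ
  have hG : LindelofSpace G :=
    isLindelof_iff_lindelofSpace.1 (hXYK.of_isClosed_subset hG_closed (subset_univ G))
  let proj : G → R.cod × Y := fun p => (⟨p.1.2, p.1.1.1, p.2⟩, p.1.1.2)
  have hproj : Continuous proj := by fun_prop
  refine LindelofSpace.of_continuous_surjective hproj ?_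
  rintro ⟨⟨z, x, hxz⟩, y⟩
  exact ⟨⟨((x, y), z), hxz⟩, rfl⟩

theorem lindelofSpace_of_comap_nhds_le {X Z : Type*} [TopologicalSpace X] [TopologicalSpace Z]
    [LindelofSpace Z] {e : X → Z} (he : ∀ z, ∃ x, comap e (𝓝 z) ≤ 𝓝 x) : LindelofSpace X := by
  refine ⟨fun F _ _ _ => ?_⟩
  obtain ⟨z, hz⟩ := cluster_point_of_Lindelof (map e F)
  obtain ⟨x, hx⟩ := he z
  have hne : (comap e (𝓝 z) ⊓ F).NeBot := neBot_inf_comap_iff_map'.2 hz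
  exact ⟨x, mem_univ x, hne.mono (inf_le_inf_right F hx)⟩

theorem exists_comap_piMap_nhds_le {ι : Type*} {X Z : ι → Type*} [∀ i, TopologicalSpace (X i)]
    [∀ i, TopologicalSpace (Z i)] {e : ∀ i, X i → Z i}
    (he : ∀ i z, ∃ x, comap (e i) (𝓝 z) ≤ 𝓝 x) (z : ∀ i, Z i) :
    ∃ x, comap (Pi.map e) (𝓝 z) ≤ 𝓝 x := by
  choose x hx using fun i => he i (z i)
  refine ⟨x, ?_⟩
  simp only [nhds_pi, Filter.pi, comap_iInf, comap_comap]
  refine iInf_mono fun i => ?_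
  calc comap (Function.eval i ∘ Pi.map e) (𝓝 (z i))
      = comap (e i ∘ Function.eval i) (𝓝 (z i)) := rfl
    _ = comap (Function.eval i) (comap (e i) (𝓝 (z i))) := comap_comap.symm
    _ ≤ comap (Function.eval i) (𝓝 (x i)) := comap_mono (hx i)

end LindelofTransfer

section NhdsFamilies

variable (X : Type u) [TopologicalSpace X]

/-- The relation between a point of `X` and the families of open sets containing all its open
neighbourhoods. A family is encoded by its characteristic function, a point of the Cantor cube. -/
def openNhdsRel : SetRel X (Opens X → Bool) :=
  {p | ∀ U : Opens X, p.1 ∈ U → p.2 U = true}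

theorem isClosed_openNhdsRel : IsClosed (openNhdsRel X) := by
  have h_eq : openNhdsRel X = ⋂ U : Opens X, {p | p.1 ∉ U} ∪ {p | p.2 U = true} := by
    ext p
    simp only [openNhdsRel, mem_ofPred_eq, mem_iInter, mem_union, imp_iff_not_or]
  rw [h_eq]
  refine isClosed_iInter fun U => IsClosed.union ?_ ?_
  · exact U.isOpen.isClosed_compl.preimage continuous_fst
  · exact isClosed_eq (by fun_prop) continuous_const

/-- The space of families of open sets containing all open neighbourhoods of some point, a
zero-dimensional stand-in for `X`. -/
abbrev OpenNhdsFamilies : Type u := (openNhdsRel X).cod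

variable {X}

open Classical in
/-- The family of all open neighbourhoods of a point. -/
noncomputable def openNhdsFamily (x : X) : OpenNhdsFamilies X :=
  ⟨fun U => decide (x ∈ U), x, fun _ => decide_eq_true⟩

theorem exists_comap_openNhdsFamily_nhds_le (z : OpenNhdsFamilies X) :
    ∃ x, comap openNhdsFamily (𝓝 z) ≤ 𝓝 x := by
  obtain ⟨x, hxz⟩ := z.2
  refine ⟨x, (nhds_basis_opens x).ge_iff.2 fun U ⟨hxU, hU⟩ => ?_⟩
  let O : Opens X := ⟨U, hU⟩
  have hcoord : Continuous fun w : OpenNhdsFamilies X => w.1 O :=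
    (continuous_apply O).comp continuous_subtype_val
  have hO : IsOpen {w : OpenNhdsFamilies X | w.1 O = true} :=
    (isOpen_discrete {true}).preimage hcoord
  refine ⟨_, hO.mem_nhds (hxz O hxU), fun y hy => ?_⟩
  simpa [openNhdsFamily, O] using hy

theorem lindelofSpace_pi_of_openNhdsFamilies {ι : Type*} [LindelofSpace (ι → OpenNhdsFamilies X)] :
    LindelofSpace (ι → X) :=
  lindelofSpace_of_comap_nhds_le
    (exists_comap_piMap_nhds_le fun _ : ι => exists_comap_openNhdsFamily_nhds_le)

end NhdsFamilies

theorem quasiLindelofSp_iff_lindelofSpace {X : Type u} [TopologicalSpace X] :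
    QuasiLindelofSp X ↔ LindelofSpace X := by
  constructor
  · refine fun h => ⟨isLindelof_of_countable_subcover fun {ι} U hU hcover => ?_⟩
    obtain ⟨𝒱, h𝒱, h𝒱_countable, h𝒱_cover⟩ := h (range U) (forall_mem_range.2 hU)
      (by rw [sUnion_range]; exact univ_subset_iff.1 hcover)
    obtain ⟨t, -, ht⟩ :=
      SurjOn.exists_bijOn_subset (show SurjOn U univ 𝒱 by rwa [SurjOn, image_univ])
    refine ⟨t, countable_of_injective_of_countable_image ht.injOn (ht.image_eq ▸ h𝒱_countable), ?_⟩
    rw [← sUnion_image, ht.image_eq, h𝒱_cover]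
  · intro h 𝒰 hU hcover
    obtain ⟨t, ht, ht_countable, ht_cover⟩ := isLindelof_univ.elim_countable_subcover_image
      (b := 𝒰) (c := id) hU (by rw [← hcover, sUnion_eq_biUnion]; rfl)
    exact ⟨t, ht, ht_countable, by rwa [sUnion_eq_biUnion, ← univ_subset_iff]⟩

theorem zeroDimensionalSp_subtype {Y : Type u} [TopologicalSpace Y] [CompactSpace Y] [T2Space Y]
    [TotallyDisconnectedSpace Y] {s : Set Y} (hs : s.Nonempty) : ZeroDimensionalSp s := by
  refine ⟨hs.to_subtype, inferInstance, _,
    isTopologicalBasis_subtype isTopologicalBasis_isClopen (· ∈ s), ?_⟩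
  rintro _ ⟨b, hb, rfl⟩
  exact IsClopen.preimage hb continuous_subtype_val

section Productively

variable {X : Type u} [TopologicalSpace X]

theorem productivelyLindelofSp_iff : ProductivelyLindelofSp X ↔
    RegularSpace X ∧ T1Space X ∧ ProductivelyQuasiLindelofSp X := by
  constructor
  · intro h
    obtain ⟨_, _, -⟩ := h PUnit
      ⟨inferInstance, inferInstance, quasiLindelofSp_iff_lindelofSpace.2 inferInstance⟩
    have he : IsEmbedding fun x : X => (x, PUnit.unit.{u + 1}) :=
      (Homeomorph.prodPUnit X).symm.isEmbedding
    exact ⟨he.isInducing.regularSpace, he.t1Space, fun Y _ hY => (h Y hY).2.2⟩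
  · rintro ⟨_, _, h⟩ Y _ hY
    have ⟨_, _, _⟩ := hY
    exact ⟨inferInstance, inferInstance, h Y hY⟩

theorem productivelyLindelofSp_openNhdsFamilies (hX : ProductivelyQuasiLindelofSp X) :
    ProductivelyLindelofSp (OpenNhdsFamilies X) := by
  refine productivelyLindelofSp_iff.2 ⟨inferInstance, inferInstance, fun Y _ hY => ?_⟩
  have := quasiLindelofSp_iff_lindelofSpace.1 (hX Y hY)
  exact quasiLindelofSp_iff_lindelofSpace.2 (lindelofSpace_cod_prod Y (isClosed_openNhdsRel X))

theorem powerfullyQuasiLindelofSp_of_openNhdsFamilies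
    (h : PowerfullyQuasiLindelofSp (OpenNhdsFamilies X)) : PowerfullyQuasiLindelofSp X := by
  have := quasiLindelofSp_iff_lindelofSpace.1 h
  exact quasiLindelofSp_iff_lindelofSpace.2 lindelofSpace_pi_of_openNhdsFamilies

theorem zeroDimensionalSp_openNhdsFamilies [Nonempty X] : ZeroDimensionalSp (OpenNhdsFamilies X) :=
  zeroDimensionalSp_subtype (nonempty_coe_sort.1 (.map openNhdsFamily ‹_›))

end Productively

/-- The following are equivalent: (1) every productively quasi-Lindelöf
space is powerfully quasi-Lindelöf; (2) every productively Lindelöf space is powerfully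
Lindelöf; (3) every zero-dimensional productively Lindelöf space is powerfully Lindelöf. -/
theorem stmt12 :
    ((∀ (X : Type u) [TopologicalSpace X],
        ProductivelyQuasiLindelofSp X → PowerfullyQuasiLindelofSp X) ↔
      (∀ (X : Type u) [TopologicalSpace X],
        ProductivelyLindelofSp X → PowerfullyLindelofSp X)) ∧
    ((∀ (X : Type u) [TopologicalSpace X],
        ProductivelyLindelofSp X → PowerfullyLindelofSp X) ↔
      (∀ (X : Type u) [TopologicalSpace X],
        ZeroDimensionalSp X → ProductivelyLindelofSp X → PowerfullyLindelofSp X)) := by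
  have lindelof_of_quasi : (∀ (X : Type u) [TopologicalSpace X],
        ProductivelyQuasiLindelofSp X → PowerfullyQuasiLindelofSp X) →
      ∀ (X : Type u) [TopologicalSpace X], ProductivelyLindelofSp X → PowerfullyLindelofSp X := by
    intro h X _ hX
    obtain ⟨_, _, hX_quasi⟩ := productivelyLindelofSp_iff.1 hX
    exact ⟨inferInstance, inferInstance, h X hX_quasi⟩
  have quasi_of_zeroDimensional : (∀ (X : Type u) [TopologicalSpace X],
        ZeroDimensionalSp X → ProductivelyLindelofSp X → PowerfullyLindelofSp X) →
      ∀ (X : Type u) [TopologicalSpace X],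
        ProductivelyQuasiLindelofSp X → PowerfullyQuasiLindelofSp X := by
    intro h X _ hX
    rcases isEmpty_or_nonempty X with hX_empty | hX_nonempty
    · exact quasiLindelofSp_iff_lindelofSpace.2 inferInstance
    · have hZ : PowerfullyLindelofSp (OpenNhdsFamilies X) :=
        h _ zeroDimensionalSp_openNhdsFamilies (productivelyLindelofSp_openNhdsFamilies hX)
      exact powerfullyQuasiLindelofSp_of_openNhdsFamilies hZ.2.2
  exact ⟨⟨lindelof_of_quasi, fun h => quasi_of_zeroDimensional fun X _ _ => h X⟩,
    ⟨fun h X _ _ => h X, fun h => lindelof_of_quasi (quasi_of_zeroDimensional h)⟩⟩
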